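/- Let Φ̊ ⊂ ℝⁿ be the root system of type BC_n (n ≥ 2), let (Λ_α) be an extension datum of type (Φ̊, Y), and let Φ^re be the associated set of real roots. Then for every nonempty proper subset J ⊊ {1, …, n}, the lift Â_J = {α ⊕ y ∈ Φ^re : α ∈ A_J} is a maximal closed subroot system of Φ^re. -/

import Mathlib

open scoped RealInnerProductSpace Pointwise

noncomputable section

namespace BdS

variable {V Y : Type*} [NormedAddCommGroup V] [InnerProductSpace ℝ V]
variable [AddCommGroup Y] [Module ℝ Y]

/-- `pairing β α = (β, α∨) = 2(β,α)/(α,α)`. -/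
def pairing (β α : V) : ℝ := 2 * ⟪β, α⟫ / ⟪α, α⟫

/-- `reflRoot α v = s_α(v) = v − (v, α∨)α`. -/
def reflRoot (α v : V) : V := v - pairing v α • α

/-- A (finite) root system in `V`. -/
def IsRootSystem (Φ : Set V) : Prop :=
  Φ.Finite ∧ (0 : V) ∉ Φ ∧ Submodule.span ℝ Φ = ⊤ ∧
    (∀ α ∈ Φ, ∀ β ∈ Φ, reflRoot α β ∈ Φ) ∧
    ∀ α ∈ Φ, ∀ β ∈ Φ, ∃ m : ℤ, pairing β α = (m : ℝ)

def IsReduced (Φ : Set V) : Prop :=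
  ∀ α ∈ Φ, ∀ c : ℝ, c • α ∈ Φ → c • α = α ∨ c • α = -α

def IsIrreducible (Φ : Set V) : Prop :=
  ∀ Φ₁ Φ₂ : Set V, Φ = Φ₁ ∪ Φ₂ → (∀ x ∈ Φ₁, ∀ y ∈ Φ₂, ⟪x, y⟫ = 0) →
    Φ₁ = ∅ ∨ Φ₂ = ∅

/-- divisible roots -/
def divSet (Φ : Set V) : Set V := {α ∈ Φ | (2:ℝ)⁻¹ • α ∈ Φ}
/-- non-divisible roots -/
def ndSet (Φ : Set V) : Set V := Φ \ divSet Φ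
/-- short roots: non-divisible roots of non-maximal squared length -/
def shortSet (Φ : Set V) : Set V := {α ∈ ndSet Φ | ∃ β ∈ ndSet Φ, ⟪α, α⟫ < ⟪β, β⟫}
/-- long roots -/
def longSet (Φ : Set V) : Set V := ndSet Φ \ shortSet Φ

/-- An extension datum of type `(Φ, Y)`. -/
def IsExtensionDatum (Φ : Set V) (Λ : V → Set Y) : Prop :=
  (∀ α ∈ Φ, ∀ β ∈ Φ, ∀ z ∈ Λ α, ∀ y ∈ Λ β, y - pairing β α • z ∈ Λ (reflRoot α β)) ∧
  (0 : Y) ∈ Λ 0 ∧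
  (∀ α ∈ ndSet Φ, (0 : Y) ∈ Λ α) ∧
  (∀ α ∈ divSet Φ, (Λ α).Nonempty) ∧
  Submodule.span ℝ (⋃ α ∈ insert (0 : V) Φ, Λ α) = ⊤

/-- subroot system of a finite root system -/
def IsSubRS (Φ Δ : Set V) : Prop :=
  Δ.Nonempty ∧ Δ ⊆ Φ ∧ ∀ α ∈ Δ, ∀ β ∈ Δ, reflRoot α β ∈ Δ

def IsClosedSubRS (Φ Δ : Set V) : Prop :=
  IsSubRS Φ Δ ∧ ∀ α ∈ Δ, ∀ β ∈ Δ, α + β ∈ Φ → α + β ∈ Δ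

def IsMaxClosedSubRS (Φ Δ : Set V) : Prop :=
  IsClosedSubRS Φ Δ ∧ Δ ≠ Φ ∧
    ∀ Δ' : Set V, IsClosedSubRS Φ Δ' → Δ' ≠ Φ → Δ ⊆ Δ' → Δ' = Δ

/-- semi-closed subroot system, relative to given short/long/divisible parts -/
def IsSemiClosedSubRS (Φ Φs Φl Φd Δ : Set V) : Prop :=
  IsSubRS Φ Δ ∧ ¬ (∀ α ∈ Δ, ∀ β ∈ Δ, α + β ∈ Φ → α + β ∈ Δ) ∧
    ∀ α ∈ Δ, ∀ β ∈ Δ, α + β ∈ Φ → α + β ∉ Δ →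
      (α ∈ Φs ∧ β ∈ Φs ∧ α + β ∈ Φl ∪ Φd) ∨ (α ∈ Φl ∧ β ∈ Φl ∧ α + β ∈ Φd)

def IsMaxSemiClosedSubRS (Φ Φs Φl Φd Δ : Set V) : Prop :=
  IsSemiClosedSubRS Φ Φs Φl Φd Δ ∧
    ∀ Δ' : Set V, IsClosedSubRS Φ Δ' → Δ' ≠ Φ → ¬ Δ ⊂ Δ'

/-- the set of real roots attached to an extension datum -/
def PhiRe (Φ : Set V) (Λ : V → Set Y) : Set (V × Y) := {x | x.1 ∈ Φ ∧ x.2 ∈ Λ x.1}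

/-- affine reflection `s_{α ⊕ y}(β ⊕ z) = s_α(β) ⊕ (z − (β,α∨)y)` -/
def reflAff (a x : V × Y) : V × Y := (reflRoot a.1 x.1, x.2 - pairing x.1 a.1 • a.2)

/-- subroot system of a set of real roots `R` -/
def IsSubSys (R Ψ : Set (V × Y)) : Prop :=
  Ψ.Nonempty ∧ Ψ ⊆ R ∧ Ψ ≠ R ∧ ∀ a ∈ Ψ, ∀ x ∈ Ψ, reflAff a x ∈ Ψ

def IsClosedSubSys (R Ψ : Set (V × Y)) : Prop :=
  IsSubSys R Ψ ∧ ∀ x ∈ Ψ, ∀ y ∈ Ψ, x + y ∈ R → x + y ∈ Ψ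

def IsMaxClosedSubSys (R Ψ : Set (V × Y)) : Prop :=
  IsClosedSubSys R Ψ ∧ ∀ Ψ' : Set (V × Y), IsClosedSubSys R Ψ' → Ψ ⊆ Ψ' → Ψ' = Ψ

/-- gradient of a subroot system -/
def Gr (Ψ : Set (V × Y)) : Set V := {α | ∃ y : Y, (α, y) ∈ Ψ}

def Zset (Ψ : Set (V × Y)) (α : V) : Set Y := {y | (α, y) ∈ Ψ}

abbrev E (n : ℕ) := EuclideanSpace ℝ (Fin n)

def eps {n : ℕ} (i : Fin n) : E n := EuclideanSpace.single i 1

def shortBC (n : ℕ) : Set (E n) := {v | ∃ i : Fin n, v = eps i ∨ v = -eps i}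

def longBC (n : ℕ) : Set (E n) :=
  {v | ∃ i j : Fin n, i ≠ j ∧ ∃ c d : ℝ, (c = 1 ∨ c = -1) ∧ (d = 1 ∨ d = -1) ∧
    v = c • eps i + d • eps j}

def divBC (n : ℕ) : Set (E n) :=
  {v | ∃ i : Fin n, v = (2:ℝ) • eps i ∨ v = -((2:ℝ) • eps i)}

def BCn (n : ℕ) : Set (E n) := shortBC n ∪ longBC n ∪ divBC n
def Bn (n : ℕ) : Set (E n) := shortBC n ∪ longBC n
def Cn (n : ℕ) : Set (E n) := longBC n ∪ divBC n

/-- the closed subroot system `A_J` of `BC_n`. -/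
def AJ (n : ℕ) (J : Set (Fin n)) : Set (E n) :=
  divBC n ∪ {v | ∃ j ∈ J, v = eps j ∨ v = -eps j} ∪
    {v | ∃ r s : Fin n, r ≠ s ∧ ((r ∈ J ∧ s ∈ J) ∨ (r ∉ J ∧ s ∉ J)) ∧
      ∃ c d : ℝ, (c = 1 ∨ c = -1) ∧ (d = 1 ∨ d = -1) ∧ v = c • eps r + d • eps s}


def Sgn (c : ℝ) : Prop := c = 1 ∨ c = -1

theorem Sgn.neg {c : ℝ} (h : Sgn c) : Sgn (-c) := by
  rcases h with rfl | rfl <;> simp [Sgn]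

theorem Sgn.mul {c d : ℝ} (h : Sgn c) (h' : Sgn d) : Sgn (c * d) := by
  rcases h with rfl | rfl <;> rcases h' with rfl | rfl <;> simp [Sgn]

theorem Sgn.sq {c : ℝ} (h : Sgn c) : c * c = 1 := by
  rcases h with rfl | rfl <;> simp

theorem mem_short {n : ℕ} {v : E n} : v ∈ shortBC n ↔ ∃ i, ∃ c, Sgn c ∧ v = c • eps i := by
  constructor
  · rintro ⟨i, rfl | rfl⟩
    · exact ⟨i, 1, Or.inl rfl, by simp⟩
    · exact ⟨i, -1, Or.inr rfl, by simp⟩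
  · rintro ⟨i, c, rfl | rfl, rfl⟩
    · exact ⟨i, by simp⟩
    · exact ⟨i, by simp⟩

theorem mem_div {n : ℕ} {v : E n} :
    v ∈ divBC n ↔ ∃ i, ∃ c, Sgn c ∧ v = (2 * c) • eps i := by
  constructor
  · rintro ⟨i, rfl | rfl⟩
    · exact ⟨i, 1, Or.inl rfl, by simp⟩
    · exact ⟨i, -1, Or.inr rfl, by simp⟩
  · rintro ⟨i, c, rfl | rfl, rfl⟩
    · exact ⟨i, by simp⟩
    · exact ⟨i, by simp⟩

theorem mem_long {n : ℕ} {v : E n} :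
    v ∈ longBC n ↔ ∃ i j, i ≠ j ∧ ∃ c d, Sgn c ∧ Sgn d ∧ v = c • eps i + d • eps j := Iff.rfl

theorem inner_eps {n : ℕ} (v : E n) (i : Fin n) : ⟪v, eps i⟫ = v i := by
  simp [eps, EuclideanSpace.inner_single_right]

theorem eps_apply {n : ℕ} (i j : Fin n) : (eps i : E n) j = if j = i then 1 else 0 := by
  simp [eps, Pi.single_apply]

theorem pairing_smul {n : ℕ} (β : E n) (i : Fin n) (a : ℝ) (ha : a ≠ 0) :
    pairing β (a • eps i) = 2 * β i / a := by
  simp only [pairing, inner_smul_right, inner_smul_left, inner_eps, eps_apply]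
  simp
  field_simp

theorem pairing_long {n : ℕ} (β : E n) (i j : Fin n) (hij : i ≠ j) (c d : ℝ)
    (hc : Sgn c) (hd : Sgn d) :
    pairing β (c • eps i + d • eps j) = c * β i + d * β j := by
  simp only [pairing, inner_add_right, inner_smul_right, inner_smul_left, inner_eps]
  simp [eps_apply, hij, hij.symm]
  rw [hc.sq, hd.sq]
  ring

theorem refl_add {n : ℕ} (α v w : E n) : reflRoot α (v + w) = reflRoot α v + reflRoot α w := by
  simp only [reflRoot, pairing, inner_add_left]
  module

theorem refl_smul {n : ℕ} (α v : E n) (c : ℝ) : reflRoot α (c • v) = c • reflRoot α v := by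
  simp only [reflRoot, pairing, inner_smul_left]
  simp only [conj_trivial]
  module

theorem refl_eps_smul {n : ℕ} (i : Fin n) (a : ℝ) (ha : a ≠ 0) (k : Fin n) :
    reflRoot (a • eps i) (eps k) = (if k = i then (-1 : ℝ) else 1) • (eps k : E n) := by
  rw [reflRoot, pairing_smul _ _ _ ha, eps_apply, smul_smul]
  by_cases h : k = i
  · subst h
    simp only [if_true]
    rw [div_mul_cancel₀ _ ha]
    module
  · simp [h, Ne.symm h]

theorem refl_eps_long {n : ℕ} (i j : Fin n) (hij : i ≠ j) (c d : ℝ)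
    (hc : Sgn c) (hd : Sgn d) (k : Fin n) :
    reflRoot (c • eps i + d • eps j) (eps k) =
      (if k = i ∨ k = j then -(c * d) else 1) • (eps (Equiv.swap i j k) : E n) := by
  rw [reflRoot, pairing_long _ _ _ hij _ _ hc hd, eps_apply, eps_apply]
  by_cases h : k = i
  · subst h
    simp [hij.symm, smul_smul, hc.sq]
  · by_cases h' : k = j
    · subst h'
      simp [hij, smul_smul, hd.sq, mul_comm]
    · simp [h, h', Ne.symm h, Ne.symm h', Equiv.swap_apply_of_ne_of_ne h h']

theorem refl_signed {n : ℕ} {α : E n} (hα : α ∈ BCn n) :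
    ∃ (σ : Equiv.Perm (Fin n)) (f : Fin n → ℝ), (∀ k, Sgn (f k)) ∧
      ∀ k, reflRoot α (eps k) = f k • eps (σ k) := by
  have key : ∀ (i : Fin n) (a : ℝ), a ≠ 0 → α = a • eps i →
      ∃ (σ : Equiv.Perm (Fin n)) (f : Fin n → ℝ), (∀ k, Sgn (f k)) ∧
      ∀ k, reflRoot α (eps k) = f k • eps (σ k) := by
    rintro i a ha rfl
    refine ⟨1, fun k => if k = i then (-1 : ℝ) else 1, fun k => ?_, fun k => ?_⟩
    · by_cases h : k = i <;> simp [h, Sgn]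
    · simpa using refl_eps_smul i a ha k
  rcases hα with (h | h) | h
  · obtain ⟨i, c, hc, h⟩ := mem_short.1 h
    exact key i c (by rcases hc with rfl | rfl <;> norm_num) h
  · obtain ⟨i, j, hij, c, d, hc, hd, rfl⟩ := mem_long.1 h
    refine ⟨Equiv.swap i j, fun k => if k = i ∨ k = j then -(c * d) else 1, fun k => ?_,
      fun k => refl_eps_long i j hij c d hc hd k⟩
    by_cases h : k = i ∨ k = j
    · simpa [h] using (hc.mul hd).neg
    · simp [h, Sgn]
  · obtain ⟨i, c, hc, h⟩ := mem_div.1 h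
    exact key i (2 * c) (by rcases hc with rfl | rfl <;> norm_num) h

theorem refl_short {n : ℕ} {α β : E n} (hα : α ∈ BCn n) (hβ : β ∈ shortBC n) :
    reflRoot α β ∈ shortBC n := by
  obtain ⟨σ, f, hf, h⟩ := refl_signed hα
  obtain ⟨i, c, hc, rfl⟩ := mem_short.1 hβ
  exact mem_short.2 ⟨σ i, c * f i, hc.mul (hf i), by rw [refl_smul, h, smul_smul]⟩

theorem refl_long {n : ℕ} {α β : E n} (hα : α ∈ BCn n) (hβ : β ∈ longBC n) :
    reflRoot α β ∈ longBC n := by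
  obtain ⟨σ, f, hf, h⟩ := refl_signed hα
  obtain ⟨i, j, hij, c, d, hc, hd, rfl⟩ := mem_long.1 hβ
  exact mem_long.2 ⟨σ i, σ j, fun e => hij (σ.injective e), c * f i, d * f j, hc.mul (hf i),
    hd.mul (hf j), by rw [refl_add, refl_smul, refl_smul, h, h, smul_smul, smul_smul]⟩

theorem refl_div {n : ℕ} {α β : E n} (hα : α ∈ BCn n) (hβ : β ∈ divBC n) :
    reflRoot α β ∈ divBC n := by
  obtain ⟨σ, f, hf, h⟩ := refl_signed hα
  obtain ⟨i, c, hc, rfl⟩ := mem_div.1 hβ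
  exact mem_div.2 ⟨σ i, c * f i, hc.mul (hf i), by
    rw [refl_smul, h, smul_smul, mul_assoc]⟩

theorem refl_BC {n : ℕ} {α β : E n} (hα : α ∈ BCn n) (hβ : β ∈ BCn n) :
    reflRoot α β ∈ BCn n := by
  rcases hβ with (h | h) | h
  · exact Or.inl (Or.inl (refl_short hα h))
  · exact Or.inl (Or.inr (refl_long hα h))
  · exact Or.inr (refl_div hα h)

theorem Sgn.int {c : ℝ} (h : Sgn c) : ∃ m : ℤ, c = m := by
  rcases h with rfl | rfl
  · exact ⟨1, by simp⟩
  · exact ⟨-1, by simp⟩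

theorem BC_int {n : ℕ} {α : E n} (hα : α ∈ BCn n) (k : Fin n) : ∃ m : ℤ, α k = m := by
  rcases hα with (h | h) | h
  · obtain ⟨i, c, hc, rfl⟩ := mem_short.1 h
    obtain ⟨m, rfl⟩ := hc.int
    exact ⟨m * (if k = i then 1 else 0), by simp [eps_apply]⟩
  · obtain ⟨i, j, hij, c, d, hc, hd, rfl⟩ := mem_long.1 h
    obtain ⟨m, rfl⟩ := hc.int
    obtain ⟨l, rfl⟩ := hd.int
    exact ⟨m * (if k = i then 1 else 0) + l * (if k = j then 1 else 0), by simp [eps_apply]⟩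
  · obtain ⟨i, c, hc, rfl⟩ := mem_div.1 h
    obtain ⟨m, rfl⟩ := hc.int
    exact ⟨2 * m * (if k = i then 1 else 0), by simp [eps_apply]⟩

theorem pairing_int {n : ℕ} {α β : E n} (hα : α ∈ BCn n) (hβ : β ∈ BCn n) :
    ∃ m : ℤ, pairing β α = m := by
  rcases hα with (h | h) | h
  · obtain ⟨i, c, hc, rfl⟩ := mem_short.1 h
    obtain ⟨m, hm⟩ := BC_int hβ i
    rcases hc with rfl | rfl
    · exact ⟨2 * m, by rw [pairing_smul _ _ _ (by norm_num), hm]; push_cast; ring⟩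
    · exact ⟨-2 * m, by rw [pairing_smul _ _ _ (by norm_num), hm]; push_cast; ring⟩
  · obtain ⟨i, j, hij, c, d, hc, hd, rfl⟩ := mem_long.1 h
    obtain ⟨a, ha⟩ := BC_int hβ i
    obtain ⟨b, hb⟩ := BC_int hβ j
    rw [pairing_long _ _ _ hij _ _ hc hd, ha, hb]
    obtain ⟨m, rfl⟩ := hc.int
    obtain ⟨l, rfl⟩ := hd.int
    exact ⟨m * a + l * b, by push_cast; ring⟩
  · obtain ⟨i, c, hc, rfl⟩ := mem_div.1 h
    obtain ⟨m, hm⟩ := BC_int hβ i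
    rcases hc with rfl | rfl
    · exact ⟨m, by rw [pairing_smul _ _ _ (by norm_num), hm]; push_cast; ring⟩
    · exact ⟨-m, by rw [pairing_smul _ _ _ (by norm_num), hm]; push_cast; ring⟩

open Classical in
/-- the parity functional: sum of the coordinates outside `J` -/
def par {n : ℕ} (J : Set (Fin n)) (v : E n) : ℝ :=
  ⟪(WithLp.toLp 2 (fun i => if i ∈ J then (0 : ℝ) else 1) : E n), v⟫

theorem par_add {n : ℕ} (J : Set (Fin n)) (v w : E n) : par J (v + w) = par J v + par J w :=
  inner_add_right _ _ _

theorem par_smul {n : ℕ} (J : Set (Fin n)) (c : ℝ) (v : E n) : par J (c • v) = c * par J v :=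
  inner_smul_right _ _ _

theorem par_eps_mem {n : ℕ} {J : Set (Fin n)} {i : Fin n} (h : i ∈ J) :
    par J (eps i) = 0 := by
  rw [par, inner_eps]; simp [h]

theorem par_eps_not_mem {n : ℕ} {J : Set (Fin n)} {i : Fin n} (h : i ∉ J) :
    par J (eps i) = 1 := by
  rw [par, inner_eps]; simp [h]

theorem Sgn.odd {c : ℝ} (h : Sgn c) (m : ℤ) : c ≠ 2 * m := by
  intro e
  rcases h with rfl | rfl
  · have : (1 : ℤ) = 2 * m := by exact_mod_cast e
    omega
  · have : (-1 : ℤ) = 2 * m := by exact_mod_cast e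
    omega

theorem mem_AJ {n : ℕ} {J : Set (Fin n)} {v : E n} (hv : v ∈ BCn n) :
    v ∈ AJ n J ↔ ∃ m : ℤ, par J v = 2 * m := by
  constructor
  · rintro ((h | ⟨j, hj, h⟩) | ⟨r, s, hrs, h, c, d, hc, hd, rfl⟩)
    · obtain ⟨i, c, hc, rfl⟩ := mem_div.1 h
      obtain ⟨m, rfl⟩ := hc.int
      rw [par_smul]
      by_cases hi : i ∈ J
      · exact ⟨0, by simp [par_eps_mem hi]⟩
      · exact ⟨m, by simp [par_eps_not_mem hi]⟩
    · refine ⟨0, ?_⟩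
      rcases h with rfl | rfl
      · simp [par_eps_mem hj]
      · rw [← neg_one_smul ℝ, par_smul]; simp [par_eps_mem hj]
    · rw [par_add, par_smul, par_smul]
      rcases h with ⟨h1, h2⟩ | ⟨h1, h2⟩
      · exact ⟨0, by simp [par_eps_mem h1, par_eps_mem h2]⟩
      · rw [par_eps_not_mem h1, par_eps_not_mem h2]
        rcases hc with rfl | rfl <;> rcases hd with rfl | rfl
        · exact ⟨1, by norm_num⟩
        · exact ⟨0, by norm_num⟩
        · exact ⟨0, by norm_num⟩
        · exact ⟨-1, by norm_num⟩
  · rintro ⟨m, hm⟩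
    rcases hv with (h | h) | h
    · obtain ⟨i, c, hc, rfl⟩ := mem_short.1 h
      by_cases hi : i ∈ J
      · refine Or.inl (Or.inr ⟨i, hi, ?_⟩)
        rcases hc with rfl | rfl <;> simp
      · rw [par_smul, par_eps_not_mem hi, mul_one] at hm
        exact absurd hm (hc.odd m)
    · obtain ⟨i, j, hij, c, d, hc, hd, rfl⟩ := mem_long.1 h
      refine Or.inr ⟨i, j, hij, ?_, c, d, hc, hd, rfl⟩
      rw [par_add, par_smul, par_smul] at hm
      by_cases hi : i ∈ J <;> by_cases hj : j ∈ J
      · exact Or.inl ⟨hi, hj⟩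
      · rw [par_eps_mem hi, par_eps_not_mem hj] at hm
        exact absurd (by simpa using hm) (hd.odd m)
      · rw [par_eps_not_mem hi, par_eps_mem hj] at hm
        exact absurd (by simpa using hm) (hc.odd m)
      · exact Or.inr ⟨hi, hj⟩
    · exact Or.inl (Or.inl h)

theorem short_nd {n : ℕ} {v : E n} (h : v ∈ shortBC n) : v ∈ ndSet (BCn n) := by
  refine ⟨Or.inl (Or.inl h), fun h' => ?_⟩
  obtain ⟨i, c, hc, rfl⟩ := mem_short.1 h
  obtain ⟨m, hm⟩ := BC_int h'.2 i
  simp [eps_apply] at hm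
  exact hc.odd m (by linarith)

theorem long_nd {n : ℕ} {v : E n} (h : v ∈ longBC n) : v ∈ ndSet (BCn n) := by
  refine ⟨Or.inl (Or.inr h), fun h' => ?_⟩
  obtain ⟨i, j, hij, c, d, hc, hd, rfl⟩ := mem_long.1 h
  obtain ⟨m, hm⟩ := BC_int h'.2 i
  simp [eps_apply, hij] at hm
  exact hc.odd m (by linarith)

theorem pairing_self {n : ℕ} {v : E n} (h : v ∈ BCn n) : pairing v v = 2 := by
  have hv : v ≠ 0 := by
    rintro rfl
    rcases h with (h | h) | h
    · obtain ⟨i, c, hc, h⟩ := mem_short.1 h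
      have := congrArg (fun w : E n => w i) h
      simp [eps_apply] at this
      exact hc.odd 0 (by simp [← this])
    · obtain ⟨i, j, hij, c, d, hc, hd, h⟩ := mem_long.1 h
      have := congrArg (fun w : E n => w i) h
      simp [eps_apply, hij] at this
      exact hc.odd 0 (by simp [← this])
    · obtain ⟨i, c, hc, h⟩ := mem_div.1 h
      have := congrArg (fun w : E n => w i) h
      simp [eps_apply] at this
      exact hc.odd 0 (by simp [this])
  have : (⟪v, v⟫ : ℝ) ≠ 0 := inner_self_ne_zero.2 hv
  rw [pairing]; field_simp

theorem refl_self {n : ℕ} {v : E n} (h : v ∈ BCn n) : reflRoot v v = -v := by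
  rw [reflRoot, pairing_self h]; module

/-- Proposition 7.2: the lift `Â_J` is a maximal closed subroot system for every
nonempty proper `J`. -/
theorem statement17 {Y : Type*} [AddCommGroup Y] [Module ℝ Y] [FiniteDimensional ℝ Y]
    {n : ℕ} (hn : 2 ≤ n) (Λ : E n → Set Y) (Λs Λl Λd : Set Y)
    (hED : IsExtensionDatum (BCn n) Λ)
    (hs : ∀ α ∈ shortBC n, Λ α = Λs) (hl : ∀ α ∈ longBC n, Λ α = Λl)
    (hd : ∀ α ∈ divBC n, Λ α = Λd) (hls : Λl ⊆ Λs)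
    (J : Set (Fin n)) (hJ : J.Nonempty) (hJ' : J ≠ Set.univ) :
    IsMaxClosedSubSys (PhiRe (BCn n) Λ)
      {x | x ∈ PhiRe (BCn n) Λ ∧ x.1 ∈ AJ n J} := by
  classical
  obtain ⟨h1, -, h0, -, -⟩ := hED
  obtain ⟨j₀, hj₀⟩ := hJ
  obtain ⟨i₀, hi₀⟩ : ∃ i, i ∉ J := by
    by_contra h
    push Not at h
    exact hJ' (Set.eq_univ_of_forall h)
  have hij₀ : i₀ ≠ j₀ := fun h => hi₀ (h ▸ hj₀)
  have one : Sgn 1 := Or.inl rfl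
  have shortm : ∀ (i : Fin n) {c : ℝ}, Sgn c → c • eps i ∈ shortBC n :=
    fun i c hc => mem_short.2 ⟨i, c, hc, rfl⟩
  have longm : ∀ {i j : Fin n}, i ≠ j → ∀ {c d : ℝ}, Sgn c → Sgn d →
      c • eps i + d • eps j ∈ longBC n :=
    fun {i j} hij c d hc hd => mem_long.2 ⟨i, j, hij, c, d, hc, hd, rfl⟩
  have sBC : ∀ {v : E n}, v ∈ shortBC n → v ∈ BCn n := fun h => Or.inl (Or.inl h)
  have lBC : ∀ {v : E n}, v ∈ longBC n → v ∈ BCn n := fun h => Or.inl (Or.inr h)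
  have S0 : (0 : Y) ∈ Λs := by
    rw [← hs _ (shortm i₀ one)]; exact h0 _ (short_nd (shortm i₀ one))
  have L0 : (0 : Y) ∈ Λl := by
    rw [← hl _ (longm hij₀ one one)]; exact h0 _ (long_nd (longm hij₀ one one))
  have Sneg : ∀ y ∈ Λs, -y ∈ Λs := by
    intro y hy
    have hm := shortm i₀ one
    have := h1 _ (sBC hm) _ (sBC hm) y (by rwa [hs _ hm]) y (by rwa [hs _ hm])
    rw [hs _ (refl_short (sBC hm) hm), pairing_self (sBC hm)] at this
    convert this using 1
    module
  have SL : ∀ y ∈ Λs, ∀ l ∈ Λl, l - y ∈ Λs := by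
    intro y hy l hll
    have hm := shortm i₀ one
    have hm' := longm hij₀ one one
    have := h1 _ (lBC hm') _ (sBC hm) l (by rwa [hl _ hm']) y (by rwa [hs _ hm])
    rw [hs _ (refl_short (lBC hm') hm), pairing_long _ _ _ hij₀ _ _ one one] at this
    have := Sneg _ this
    convert this using 1
    simp [eps_apply, hij₀.symm]
  have sR : ∀ (i : Fin n) {c : ℝ}, Sgn c → ∀ y ∈ Λs, (c • eps i, y) ∈ PhiRe (BCn n) Λ :=
    fun i c hc y hy => ⟨sBC (shortm i hc), by
      show y ∈ Λ (c • eps i)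
      rwa [hs _ (shortm i hc)]⟩
  have lR : ∀ {i j : Fin n}, i ≠ j → ∀ {c d : ℝ}, Sgn c → Sgn d → ∀ y ∈ Λl,
      (c • eps i + d • eps j, y) ∈ PhiRe (BCn n) Λ :=
    fun {i j} hij c d hc hd y hy => ⟨lBC (longm hij hc hd), by
      show y ∈ Λ (c • eps i + d • eps j)
      rwa [hl _ (longm hij hc hd)]⟩
  have sA : ∀ {j : Fin n}, j ∈ J → ∀ {c : ℝ}, Sgn c → c • eps j ∈ AJ n J :=
    fun {j} hj c hc => (mem_AJ (sBC (shortm j hc))).2 ⟨0, by rw [par_smul, par_eps_mem hj]; simp⟩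
  refine ⟨⟨⟨⟨((1 : ℝ) • eps j₀, 0), sR _ one _ S0, sA hj₀ one⟩, fun x hx => hx.1, ?_, ?_⟩, ?_⟩, ?_⟩
  · intro h
    have := sR i₀ one _ S0
    rw [← h] at this
    obtain ⟨m, hm⟩ := (mem_AJ this.1.1).1 this.2
    simp only [par_smul, par_eps_not_mem hi₀, mul_one] at hm
    exact one.odd m hm
  · rintro ⟨α, y⟩ ⟨⟨ha, hy⟩, ha'⟩ ⟨β, z⟩ ⟨⟨hb, hz⟩, hb'⟩
    dsimp only at ha hy ha' hb hz hb'
    refine ⟨⟨refl_BC ha hb, h1 _ ha _ hb _ hy _ hz⟩, ?_⟩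
    refine (mem_AJ (refl_BC ha hb)).2 ?_
    obtain ⟨p, hp⟩ := (mem_AJ ha).1 ha'
    obtain ⟨q, hq⟩ := (mem_AJ hb).1 hb'
    obtain ⟨m, hm⟩ := pairing_int ha hb
    refine ⟨q - m * p, ?_⟩
    rw [reflRoot, hm, sub_eq_add_neg, ← neg_smul, par_add, par_smul, hp, hq]
    push_cast; ring
  · rintro ⟨α, y⟩ ⟨⟨ha, hy⟩, ha'⟩ ⟨β, z⟩ ⟨⟨hb, hz⟩, hb'⟩ hab
    refine ⟨hab, (mem_AJ hab.1).2 ?_⟩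
    obtain ⟨p, hp⟩ := (mem_AJ ha).1 ha'
    obtain ⟨q, hq⟩ := (mem_AJ hb).1 hb'
    dsimp only at hp hq
    refine ⟨p + q, ?_⟩
    show par J (α + β) = _
    rw [par_add, hp, hq]
    push_cast; ring
  · rintro Ψ ⟨⟨-, hsub, hne, hrefl⟩, hcl⟩ hle
    by_contra hneq
    apply hne
    -- everything over a short root in `J` is in `Ψ`
    have full : ∀ {j : Fin n}, j ∈ J → ∀ {c : ℝ}, Sgn c → ∀ y ∈ Λs, (c • eps j, y) ∈ Ψ :=
      fun {j} hj c hc y hy => hle ⟨sR j hc y hy, sA hj hc⟩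
    have ne : ∀ {i j : Fin n}, i ∉ J → j ∈ J → i ≠ j := fun hi hj h => hi (h ▸ hj)
    have addm : ∀ {α β γ : E n} {y z w : Y}, (α, y) ∈ Ψ → (β, z) ∈ Ψ → α + β = γ → y + z = w →
        (γ, w) ∈ PhiRe (BCn n) Λ → (γ, w) ∈ Ψ := by
      rintro α β γ y z w ha hb rfl rfl h
      exact hcl _ ha _ hb h
    have stepA : ∀ {i : Fin n}, i ∉ J → ∀ {c : ℝ}, Sgn c → ∀ {y : Y}, (c • eps i, y) ∈ Ψ →
        ∀ {j : Fin n}, j ∈ J → ∀ {d : ℝ}, Sgn d → ∀ l ∈ Λl, (c • eps i + d • eps j, l) ∈ Ψ := by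
      intro i hi c hc y hy j hj d hd l hll
      have hyS : y ∈ Λs := by
        have := (hsub hy).2
        dsimp only at this
        rwa [hs _ (shortm i hc)] at this
      exact addm hy (full hj hd _ (SL y hyS l hll)) rfl (by abel) (lR (ne hi hj) hc hd l hll)
    have stepB : ∀ {i : Fin n}, i ∉ J → ∀ {c : ℝ}, Sgn c → ∀ {y : Y}, (c • eps i, y) ∈ Ψ →
        ∀ s ∈ Λs, (c • eps i, s) ∈ Ψ := by
      intro i hi c hc y hy s hs'
      exact addm (stepA hi hc hy hj₀ one 0 L0) (full hj₀ one.neg s hs') (by module) (by abel)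
        (sR i hc s hs')
    have stepC : ∀ {i : Fin n}, i ∉ J → ∀ {c : ℝ}, Sgn c → ∀ {y : Y}, (c • eps i, y) ∈ Ψ →
        ∀ {d : ℝ}, Sgn d → ∀ s ∈ Λs, (d • eps i, s) ∈ Ψ := by
      intro i hi c hc y hy d hd s hs'
      have hz := stepB hi hc hy 0 S0
      have hn : ((-c) • eps i, (0 : Y)) ∈ Ψ := by
        have := hrefl _ hz _ hz
        simp only [reflAff] at this
        rw [refl_self (sBC (shortm i hc))] at this
        simpa using this
      have hdc : d = c ∨ d = -c := by
        rcases hd with rfl | rfl <;> rcases hc with rfl | rfl <;> simp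
      rcases hdc with rfl | rfl
      · exact stepB hi hc hy s hs'
      · exact stepB hi hc.neg hn s hs'
    have stepD : ∀ {i : Fin n}, i ∉ J → ∀ {c : ℝ}, Sgn c → ∀ {y : Y}, (c • eps i, y) ∈ Ψ →
        ∀ {k : Fin n}, k ∉ J → ∀ {d : ℝ}, Sgn d → ∀ s ∈ Λs, (d • eps k, s) ∈ Ψ := by
      intro i hi c hc y hy k hk d hd s hs'
      by_cases hik : i = k
      · subst hik
        exact stepC hi hc hy hd s hs'
      · refine addm (stepB hi hc hy s hs') (β := (-c) • eps i + d • eps k) (z := 0) (hle ?_)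
          (by module) (by abel) (sR k hd s hs')
        exact ⟨lR hik hc.neg hd 0 L0, Or.inr ⟨i, k, hik, Or.inr ⟨hi, hk⟩, _, _, hc.neg, hd, rfl⟩⟩
    have stepE : ∀ {i : Fin n}, i ∉ J → ∀ {c : ℝ}, Sgn c → ∀ {y : Y}, (c • eps i, y) ∈ Ψ →
        Ψ = PhiRe (BCn n) Λ := by
      intro i hi c hc y hy
      have allS : ∀ k {d : ℝ}, Sgn d → ∀ s ∈ Λs, (d • eps k, s) ∈ Ψ := by
        intro k d hd s hs'
        by_cases hk : k ∈ J
        · exact full hk hd s hs'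
        · exact stepD hi hc hy hk hd s hs'
      refine Set.Subset.antisymm hsub ?_
      rintro ⟨α, z⟩ hz
      obtain ⟨ha, hz'⟩ := id hz
      dsimp only at ha hz'
      rcases ha with (h | h) | h
      · rw [hs _ h] at hz'
        obtain ⟨k, d, hd', rfl⟩ := mem_short.1 h
        exact allS k hd' z hz'
      · rw [hl _ h] at hz'
        obtain ⟨k, m, hkm, d, e, hd', he, rfl⟩ := mem_long.1 h
        exact addm (allS k hd' z (hls hz')) (allS m he 0 S0) rfl (by abel) hz
      · exact hle ⟨hz, Or.inl (Or.inl h)⟩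
    obtain ⟨⟨α, y⟩, hx, hx'⟩ : ∃ x ∈ Ψ, x.1 ∉ AJ n J := by
      by_contra hcon
      push Not at hcon
      exact hneq (Set.Subset.antisymm (fun x hx => ⟨hsub hx, hcon x hx⟩) hle)
    dsimp only at hx'
    obtain ⟨ha, hy⟩ := hsub hx
    dsimp only at ha hy
    rcases ha with (h | h) | h
    · obtain ⟨k, d, hd', rfl⟩ := mem_short.1 h
      exact stepE (fun hk => hx' (sA hk hd')) hd' hx
    · rw [hl _ h] at hy
      obtain ⟨k, m, hkm, d, e, hd', he, rfl⟩ := mem_long.1 h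
      have hS := Sneg y (hls hy)
      by_cases hk : k ∈ J <;> by_cases hm : m ∈ J
      · exact absurd (Or.inr ⟨k, m, hkm, Or.inl ⟨hk, hm⟩, d, e, hd', he, rfl⟩) hx'
      · exact stepE hm he (addm hx (full hk hd'.neg _ hS) (by module) (add_neg_cancel y)
          (sR m he 0 S0))
      · exact stepE hk hd' (addm hx (full hm he.neg _ hS) (by module) (add_neg_cancel y)
          (sR k hd' 0 S0))
      · exact absurd (Or.inr ⟨k, m, hkm, Or.inr ⟨hk, hm⟩, d, e, hd', he, rfl⟩) hx'
    · exact absurd (Or.inl (Or.inl h)) hx'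

end BdS
end
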